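/- The scaled modified LiSSA series converges to the unscaled generalized influence function: Let H_J be a real n×k matrix with full column rank, let g ∈ ℝⁿ, and set M² = ρ(H_Jᵀ H_J) + 1. Define the iteration on ℝ^k by I₀ = (1/M²)·H_Jᵀ g and I_m = I₀ + (I − (1/M²)·H_Jᵀ H_J)·I_{m−1}. Then the sequence (I_m) converges, and its limit equals the unscaled generalized influence function (H_Jᵀ H_J)⁻¹ H_Jᵀ g. -/

import Mathlib

/-!
Full column rank makes the Gram matrix `A = Hᵀ * H` positive definite, so its eigenvalues `λ`
satisfy `0 < λ ≤ ρ(A)`. With `c = 1 / (ρ(A) + 1)` the matrix `B = 1 - c • A` therefore acts on an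
orthonormal eigenbasis of `A` with factors `1 - c * λ ∈ (0, 1)`, and `B ^ m *ᵥ v → 0` for every `v`
(`tendsto_pow_mulVec_zero`). The generalized influence function `x` solves `A *ᵥ x = Hᵀ *ᵥ g`,
hence it is a fixed point of the iteration, and the error `I m - x` equals `B ^ m *ᵥ (I 0 - x)`.
-/

open Matrix

/-- The spectral radius of a real square matrix: the supremum of the norms of
the elements of its spectrum (for a real symmetric matrix this is the maximum
of the absolute values of its eigenvalues). -/
noncomputable def specRad {k : ℕ} (A : Matrix (Fin k) (Fin k) ℝ) : ℝ :=
  (spectralRadius ℝ A).toReal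

/-- Over `ℝ`, `specRad` bounds the spectrum of a matrix. The content is that the supremum in
`spectralRadius` is finite, since otherwise `toReal` would return `0`. -/
lemma abs_le_specRad {k : ℕ} (A : Matrix (Fin k) (Fin k) ℝ) {x : ℝ} (hx : x ∈ spectrum ℝ A) :
    |x| ≤ specRad A := by
  have hfin : spectralRadius ℝ A ≠ ⊤ := by
    obtain ⟨C, hC⟩ := (A.finite_spectrum.image (fun y : ℝ => ‖y‖₊)).bddAbove
    have hle : spectralRadius ℝ A ≤ (C : ENNReal) :=
      iSup₂_le fun y hy => ENNReal.coe_le_coe.2 (hC ⟨y, hy, rfl⟩)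
    exact (hle.trans_lt ENNReal.coe_lt_top).ne
  have hle : (‖x‖₊ : ENNReal) ≤ spectralRadius ℝ A :=
    le_iSup₂ (f := fun y (_ : y ∈ spectrum ℝ A) => (‖y‖₊ : ENNReal)) x hx
  simpa [specRad] using ENNReal.toReal_mono hfin hle

lemma posDef_gram_of_rank_eq {n k : ℕ} (H : Matrix (Fin n) (Fin k) ℝ) (hrank : H.rank = k) :
    (Hᵀ * H).PosDef := by
  have hli : LinearIndependent ℝ H.col := by
    rw [linearIndependent_iff_card_eq_finrank_span, Fintype.card_fin, Set.finrank,
      ← Matrix.rank_eq_finrank_span_cols, hrank]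
  simpa using Matrix.PosDef.conjTranspose_mul_self H (Matrix.mulVec_injective_iff.2 hli)

/-- The powers of `1 - c • A` tend to `0` strongly when every eigenvalue of `1 - c • A` has absolute
value less than one. -/
lemma tendsto_pow_mulVec_zero {k : ℕ} {A : Matrix (Fin k) (Fin k) ℝ} (hA : A.IsHermitian) (c : ℝ)
    (hc : ∀ i, |1 - c * hA.eigenvalues i| < 1) (v : Fin k → ℝ) :
    Filter.Tendsto (fun m : ℕ => ((1 - c • A) ^ m).mulVec v) Filter.atTop (nhds 0) := by
  set b := hA.eigenvectorBasis
  have hpow (i : Fin k) (m : ℕ) : ((1 - c • A) ^ m).mulVec (b i) =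
      (1 - c * hA.eigenvalues i) ^ m • (b i : Fin k → ℝ) := by
    induction m with
    | zero => simp
    | succ m ih =>
      rw [pow_succ, ← Matrix.mulVec_mulVec, Matrix.sub_mulVec, Matrix.one_mulVec,
        Matrix.smul_mulVec, hA.mulVec_eigenvectorBasis, smul_smul, Matrix.mulVec_sub,
        Matrix.mulVec_smul, ih, pow_succ, smul_smul, ← sub_smul]
      congr 1
      ring
  have hv : v = ∑ i, inner ℝ (b i) (WithLp.toLp 2 v) • (b i : Fin k → ℝ) := by
    simpa using (congrArg WithLp.ofLp (b.sum_repr' (WithLp.toLp 2 v))).symm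
  rw [hv]
  simp_rw [Matrix.mulVec_sum, Matrix.mulVec_smul, hpow]
  rw [show (0 : Fin k → ℝ) =
    ∑ i, inner ℝ (b i) (WithLp.toLp 2 v) • ((0 : ℝ) • (b i : Fin k → ℝ)) by simp]
  exact tendsto_finsetSum _ fun i _ =>
    ((tendsto_pow_atTop_nhds_zero_of_abs_lt_one (hc i)).smul_const _).const_smul _

/-- The scaled modified LiSSA series converges to the unscaled generalized
influence function: with `H ∈ ℝ^{n×k}` of full column rank, `g ∈ ℝⁿ`,
`M² = ρ(Hᵀ H) + 1`, and the iteration `I₀ = (1/M²) • Hᵀ g`,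
`I_{m+1} = I₀ + (I - (1/M²) • Hᵀ H) I_m`, the sequence converges to
`(Hᵀ H)⁻¹ Hᵀ g`. -/
theorem scaled_lissa_tendsto_gif {n k : ℕ} (H : Matrix (Fin n) (Fin k) ℝ)
    (hrank : H.rank = k) (g : Fin n → ℝ) (M : ℝ)
    (hM : M ^ 2 = specRad (Hᵀ * H) + 1) (I : ℕ → Fin k → ℝ)
    (h0 : I 0 = (1 / M ^ 2) • Hᵀ.mulVec g)
    (hrec : ∀ m : ℕ, I (m + 1) =
      I 0 + ((1 : Matrix (Fin k) (Fin k) ℝ) - (1 / M ^ 2) • (Hᵀ * H)).mulVec (I m)) :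
    Filter.Tendsto I Filter.atTop (nhds (((Hᵀ * H)⁻¹ * Hᵀ).mulVec g)) := by
  have hpd := posDef_gram_of_rank_eq H hrank
  set A := Hᵀ * H with hAdef
  set c := 1 / M ^ 2 with hcdef
  set x := (A⁻¹ * Hᵀ).mulVec g with hx
  have hAx : A.mulVec x = Hᵀ.mulVec g := by
    rw [hx, Matrix.mulVec_mulVec, ← Matrix.mul_assoc,
      Matrix.mul_nonsing_inv _ ((Matrix.isUnit_iff_isUnit_det _).1 hpd.isUnit), Matrix.one_mul]
  have hc : ∀ i, |1 - c * hpd.isHermitian.eigenvalues i| < 1 := by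
    intro i
    have hpos := hpd.eigenvalues_pos i
    have hle := (le_abs_self _).trans
      (abs_le_specRad A (hpd.isHermitian.eigenvalues_mem_spectrum_real i))
    have hM0 : 0 < M ^ 2 := by linarith
    have h1 : 0 < c * hpd.isHermitian.eigenvalues i := by positivity
    have h2 : c * hpd.isHermitian.eigenvalues i < 1 := by
      rw [hcdef, one_div_mul_eq_div, div_lt_one hM0]
      linarith
    rw [abs_lt]
    constructor <;> linarith
  have herr (m : ℕ) : I m - x = ((1 - c • A) ^ m).mulVec (I 0 - x) := by
    induction m with
    | zero => simp
    | succ m ih =>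
      rw [pow_succ', ← Matrix.mulVec_mulVec, ← ih, hrec, h0, Matrix.mulVec_sub,
        Matrix.sub_mulVec _ _ x, Matrix.one_mulVec, Matrix.smul_mulVec, hAx]
      abel
  have hlim := tendsto_pow_mulVec_zero hpd.isHermitian c hc (I 0 - x)
  simp_rw [← herr] at hlim
  exact tendsto_sub_nhds_zero_iff.1 hlim
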